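/- Let α ∈ (0,2), β ∈ ℝ, and μ ∈ (απ/2, min(π, απ)). Then there exists a constant C > 0 such that for every z ∈ ℂ with z ≠ 0 and μ ≤ |arg z| ≤ π, one has |E_{α,β}(z)| ≤ C (1 + |z|)^{-1}. -/

import Mathlib

/-- The two-parameter Mittag-Leffler function `E_{α,β}(z) = ∑_{n=0}^∞ z^n / Γ(nα+β)`. -/
noncomputable def mittagLeffler (α β : ℝ) (z : ℂ) : ℂ :=
  ∑' n : ℕ, z ^ n / Complex.Gamma ((n : ℂ) * α + β)

/-!
With `w = -z`, the terms of the series are `(-1) ^ n F(n)` for `F(s) = w ^ s / Γ(α s + β)`. These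
are residues of `F(s) π / sin (π s)`, so the series equals a Mellin–Barnes integral along the line
`Re s = -1/2`. Moving the line to `Re s = -3/2` picks up the residue at `s = -1`, which has size
`O(|z|⁻¹)`, and leaves an integral of size `O(|z| ^ (-3/2))`. Convergence on these lines is what
the sector provides: `1 / |Γ(α s + β)|` grows at most like `exp ((απ/2 + ε) |Im s|)`, `|w ^ s|` at
most like `exp ((π - μ) |Im s|)`, while `1 / |sin (π s)|` decays like `exp (-π |Im s|)`, and
`απ/2 < μ`. Near the origin the power series is bounded termwise.
-/

open MeasureTheory Filter Topology
open Complex (I betaIntegral)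
open Real (exp cosh)
open scoped Real

/-! ### Growth of the reciprocal Gamma function -/

theorem norm_betaIntegral_le {u v : ℂ} (hu : 0 < u.re) (hv : 0 < v.re) :
    ‖betaIntegral u v‖ ≤ ProbabilityTheory.beta u.re v.re := by
  have norm_integrand : ∀ᵐ x : ℝ, x ∈ Set.uIoc 0 1 →
      (x : ℂ) ^ ((u.re : ℂ) - 1) * (1 - (x : ℂ)) ^ ((v.re : ℂ) - 1) =
        (‖(x : ℂ) ^ (u - 1) * (1 - (x : ℂ)) ^ (v - 1)‖ : ℝ) := by
    filter_upwards [volume.ae_ne 1] with x hx_ne hx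
    rw [Set.uIoc_of_le zero_le_one] at hx
    have hx₀ : 0 < x := hx.1
    have hx₁ : 0 < 1 - x := sub_pos.2 (lt_of_le_of_ne hx.2 hx_ne)
    rw [← Complex.ofReal_one, ← Complex.ofReal_sub 1 x, norm_mul,
      Complex.norm_cpow_eq_rpow_re_of_pos hx₀, Complex.norm_cpow_eq_rpow_re_of_pos hx₁]
    push_cast [Complex.ofReal_cpow hx₀.le, Complex.ofReal_cpow hx₁.le]
    simp
  rw [ProbabilityTheory.beta_eq_betaIntegralReal _ _ hu hv, betaIntegral, betaIntegral,
    intervalIntegral.integral_congr_ae norm_integrand, intervalIntegral.integral_ofReal,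
    Complex.ofReal_re]
  exact intervalIntegral.norm_integral_le_integral_norm zero_le_one

-- The ratio `Γ(Re s) / |Γ(s)|` decreases in `Re s`, because `|B(s₀, y)| ≤ B(Re s₀, y)` for `y > 0`.
theorem Gamma_re_mul_norm_inv_Gamma_le {s : ℂ} {x : ℝ} (hx : 0 < x) (hxs : x ≤ s.re) :
    Real.Gamma s.re * ‖(Complex.Gamma s)⁻¹‖ ≤
      Real.Gamma x * ‖(Complex.Gamma (x + s.im * I))⁻¹‖ := by
  rcases hxs.eq_or_lt with rfl | hxs
  · rw [Complex.re_add_im]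
  set s₀ : ℂ := x + s.im * I
  have hs₀ : s₀.re = x := by simp [s₀]
  have hy : 0 < s.re - x := sub_pos.2 hxs
  have hΓs := Real.Gamma_pos_of_pos (hx.trans hxs)
  have hΓy := Real.Gamma_pos_of_pos hy
  have norm_Gamma_s : 0 < ‖Complex.Gamma s‖ :=
    norm_pos_iff.2 (Complex.Gamma_ne_zero_of_re_pos (hx.trans hxs))
  have norm_Gamma_s₀ : 0 < ‖Complex.Gamma s₀‖ :=
    norm_pos_iff.2 (Complex.Gamma_ne_zero_of_re_pos (hs₀ ▸ hx))
  have beta_le := norm_betaIntegral_le (u := s₀) (v := (s.re - x : ℝ)) (hs₀ ▸ hx) hy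
  have Gamma_mul := congrArg norm <|
    Complex.Gamma_mul_Gamma_eq_betaIntegral (s := s₀) (t := (s.re - x : ℝ)) (hs₀ ▸ hx) hy
  have hs : s₀ + (s.re - x : ℝ) = s := by apply Complex.ext <;> simp [s₀]
  rw [hs, norm_mul, norm_mul, Complex.Gamma_ofReal, Complex.norm_real,
    Real.norm_of_nonneg hΓy.le] at Gamma_mul
  rw [hs₀, Complex.ofReal_re, ProbabilityTheory.beta, add_sub_cancel, le_div_iff₀ hΓs] at beta_le
  rw [norm_inv, norm_inv, ← div_eq_mul_inv, ← div_eq_mul_inv,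
    div_le_div_iff₀ norm_Gamma_s norm_Gamma_s₀]
  refine le_of_mul_le_mul_right ?_ hΓy
  calc Real.Gamma s.re * ‖Complex.Gamma s₀‖ * Real.Gamma (s.re - x)
      = ‖Complex.Gamma s‖ * (‖betaIntegral s₀ (s.re - x : ℝ)‖ * Real.Gamma s.re) := by
        rw [mul_assoc, Gamma_mul]; ring
    _ ≤ ‖Complex.Gamma s‖ * (Real.Gamma x * Real.Gamma (s.re - x)) := by gcongr
    _ = Real.Gamma x * ‖Complex.Gamma s‖ * Real.Gamma (s.re - x) := by ring

theorem sin_pi_mul_half_add (t : ℝ) :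
    Complex.sin (π * ((1 / 2 : ℝ) + t * I)) = cosh (π * t) := by
  rw [show (π * ((1 / 2 : ℝ) + t * I) : ℂ) = (π * t : ℝ) * I + π / 2 by push_cast; ring,
    Complex.sin_add_pi_div_two, Complex.cos_mul_I, Complex.ofReal_cosh]

theorem norm_Gamma_half_add_mul_I_sq (y : ℝ) :
    ‖Complex.Gamma (1 / 2 + y * I)‖ ^ 2 = π / cosh (π * y) := by
  set s : ℂ := 1 / 2 + y * I with hs
  have one_sub : 1 - s = (starRingEnd ℂ) s := by
    apply Complex.ext <;> norm_num [hs]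
  have sin_eq : Complex.sin (π * s) = (cosh (π * y) : ℝ) := by
    rw [hs, ← sin_pi_mul_half_add]
    push_cast
    rfl
  have reflection := Complex.Gamma_mul_Gamma_one_sub s
  rw [one_sub, Complex.Gamma_conj, sin_eq, Complex.mul_conj, Complex.normSq_eq_norm_sq]
    at reflection
  exact_mod_cast reflection

theorem norm_inv_Gamma_half_add_mul_I_le (y : ℝ) :
    ‖(Complex.Gamma (1 / 2 + y * I))⁻¹‖ ≤ exp (π / 2 * |y|) := by
  refine le_of_sq_le_sq ?_ (Real.exp_pos _).le
  have hpi : (1 : ℝ) ≤ π := by linarith [Real.pi_gt_three]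
  calc ‖(Complex.Gamma (1 / 2 + y * I))⁻¹‖ ^ 2 = cosh (π * y) / π := by
        rw [norm_inv, inv_pow, norm_Gamma_half_add_mul_I_sq, inv_div]
    _ ≤ cosh (π * y) := div_le_self (Real.cosh_pos _).le hpi
    _ ≤ exp |π * y| := by
        rw [← Real.cosh_abs, Real.cosh_eq]
        linarith [Real.exp_le_exp.2 (neg_le_self (abs_nonneg (π * y)))]
    _ = exp (π / 2 * |y|) ^ 2 := by
        rw [← Real.exp_nat_mul, abs_mul, abs_of_pos Real.pi_pos]
        congr 1
        push_cast
        ring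

theorem rpow_mul_exp_neg_le_Gamma {M y : ℝ} (hM : 0 < M) (hy : 1 ≤ y) :
    M ^ (y - 1) * exp (-M) ≤ Real.Gamma y := by
  have hint : IntegrableOn (fun t ↦ exp (-t) * t ^ (y - 1)) (Set.Ioi 0) :=
    Real.GammaIntegral_convergent (by linarith)
  calc M ^ (y - 1) * exp (-M)
      = ∫ t in Set.Ioi M, exp (-t) * M ^ (y - 1) := by
        rw [integral_mul_const, integral_exp_neg_Ioi, mul_comm]
    _ ≤ ∫ t in Set.Ioi M, exp (-t) * t ^ (y - 1) := by
        refine setIntegral_mono_on ((integrableOn_exp_neg_Ioi M).mul_const _)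
          (hint.mono_set (Set.Ioi_subset_Ioi hM.le)) measurableSet_Ioi fun t ht ↦ ?_
        have hMt : M ≤ t := le_of_lt ht
        gcongr
    _ ≤ ∫ t in Set.Ioi 0, exp (-t) * t ^ (y - 1) := by
        refine setIntegral_mono_set hint (ae_restrict_of_forall_mem measurableSet_Ioi fun t ht ↦ ?_)
          (Set.Ioi_subset_Ioi hM.le).eventuallyLE
        have ht₀ : 0 ≤ t := le_of_lt ht
        positivity
    _ = Real.Gamma y := (Real.Gamma_eq_integral (by linarith)).symm

theorem exists_inv_Gamma_le_exp (r : ℝ) :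
    ∃ C, ∀ x : ℝ, 0 < x → (Real.Gamma x)⁻¹ ≤ C * exp (-r * x) := by
  set M := exp (r + 1) with hM
  refine ⟨exp M, fun x hx ↦ ?_⟩
  have hΓ := Real.Gamma_pos_of_pos hx
  have growth : exp ((r + 1) * x) * exp (-M) ≤ exp x * Real.Gamma x := by
    calc exp ((r + 1) * x) * exp (-M)
        = M ^ (x + 1 - 1) * exp (-M) := by rw [add_sub_cancel_right, hM, ← Real.exp_mul]
      _ ≤ Real.Gamma (x + 1) := rpow_mul_exp_neg_le_Gamma (Real.exp_pos _) (by linarith)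
      _ = x * Real.Gamma x := Real.Gamma_add_one hx.ne'
      _ ≤ exp x * Real.Gamma x := by gcongr; linarith [Real.add_one_le_exp x]
  rw [inv_le_iff_one_le_mul₀' hΓ]
  calc 1 = exp (M - r * x - x) * (exp ((r + 1) * x) * exp (-M)) := by
        rw [← Real.exp_add, ← Real.exp_add, eq_comm, Real.exp_eq_one_iff]
        ring
    _ ≤ exp (M - r * x - x) * (exp x * Real.Gamma x) := by gcongr
    _ = Real.Gamma x * (exp M * exp (-r * x)) := by
        rw [← mul_assoc, ← Real.exp_add, ← Real.exp_add, mul_comm (Real.Gamma x)]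
        ring_nf

theorem exists_norm_le_exp (a : ℝ) {ε : ℝ} (hε : 0 < ε) :
    ∃ K, ∀ s : ℂ, a ≤ s.re → ‖s‖ ≤ K * exp s.re * exp (ε * |s.im|) := by
  refine ⟨(1 + ε⁻¹) * exp (2 * |a|), fun s hs ↦ ?_⟩
  have abs_re_le : |s.re| ≤ 2 * |a| + s.re := by
    rw [abs_le]
    constructor <;> linarith [neg_abs_le a, abs_nonneg a]
  calc ‖s‖ ≤ |s.re| + |s.im| := Complex.norm_le_abs_re_add_abs_im s
    _ = |s.re| + ε⁻¹ * (ε * |s.im|) := by rw [inv_mul_cancel_left₀ hε.ne']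
    _ ≤ (1 + ε⁻¹) * ((|s.re| + 1) * (ε * |s.im| + 1)) := by
        have h_re : 0 ≤ |s.re| := abs_nonneg _
        have h_im : 0 ≤ ε * |s.im| := by positivity
        have h_inv : 0 < ε⁻¹ := inv_pos.2 hε
        nlinarith [mul_nonneg h_re h_im, mul_nonneg h_inv.le h_re,
          mul_nonneg h_inv.le (mul_nonneg h_re h_im)]
    _ ≤ (1 + ε⁻¹) * (exp (2 * |a| + s.re) * exp (ε * |s.im|)) := by
        have h_re := (Real.add_one_le_exp |s.re|).trans (Real.exp_le_exp.2 abs_re_le)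
        gcongr
        exact Real.add_one_le_exp _
    _ = (1 + ε⁻¹) * exp (2 * |a|) * exp s.re * exp (ε * |s.im|) := by rw [Real.exp_add]; ring

theorem exists_norm_inv_Gamma_le_of_half_le_re (r : ℝ) {c : ℝ} (hc : π / 2 ≤ c) :
    ∃ A, ∀ s : ℂ, 1 / 2 ≤ s.re →
      ‖(Complex.Gamma s)⁻¹‖ ≤ A * exp (-r * s.re) * exp (c * |s.im|) := by
  obtain ⟨C, hC⟩ := exists_inv_Gamma_le_exp r
  refine ⟨Real.Gamma (1 / 2) * C, fun s hs ↦ ?_⟩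
  have hs₀ : 0 < s.re := one_half_pos.trans_le hs
  have hΓs := Real.Gamma_pos_of_pos hs₀
  have antitone_Gamma := Gamma_re_mul_norm_inv_Gamma_le one_half_pos hs
  push_cast at antitone_Gamma
  calc ‖(Complex.Gamma s)⁻¹‖
      = (Real.Gamma s.re)⁻¹ * (Real.Gamma s.re * ‖(Complex.Gamma s)⁻¹‖) := by
        rw [inv_mul_cancel_left₀ hΓs.ne']
    _ ≤ (Real.Gamma s.re)⁻¹ *
          (Real.Gamma (1 / 2) * ‖(Complex.Gamma (1 / 2 + s.im * I))⁻¹‖) := by gcongr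
    _ ≤ (Real.Gamma s.re)⁻¹ * (Real.Gamma (1 / 2) * exp (π / 2 * |s.im|)) := by
        gcongr
        exact norm_inv_Gamma_half_add_mul_I_le s.im
    _ ≤ C * exp (-r * s.re) * (Real.Gamma (1 / 2) * exp (c * |s.im|)) := by
        have hΓs_inv := hC s.re hs₀
        have hC₀ := (inv_pos.2 hΓs).le.trans hΓs_inv
        gcongr
    _ = Real.Gamma (1 / 2) * C * exp (-r * s.re) * exp (c * |s.im|) := by ring

-- In `1 / Γ(s) = s / Γ(s + 1)`, the factor `s` is absorbed by a slight loss in both exponents.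
theorem exists_norm_inv_Gamma_le_of_add_one {a : ℝ}
    (h : ∀ r c, π / 2 < c → ∃ A, ∀ s : ℂ, a + 1 ≤ s.re →
      ‖(Complex.Gamma s)⁻¹‖ ≤ A * exp (-r * s.re) * exp (c * |s.im|))
    (r : ℝ) {c : ℝ} (hc : π / 2 < c) :
    ∃ A, ∀ s : ℂ, a ≤ s.re →
      ‖(Complex.Gamma s)⁻¹‖ ≤ A * exp (-r * s.re) * exp (c * |s.im|) := by
  obtain ⟨c', hc', hc'c⟩ := exists_between hc
  obtain ⟨A, hA⟩ := h (r + 1) c' hc'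
  obtain ⟨K, hK⟩ := exists_norm_le_exp a (sub_pos.2 hc'c)
  refine ⟨K * A * exp (-(r + 1)), fun s hs ↦ ?_⟩
  have norm_le := hK s hs
  have norm_succ_le := hA (s + 1) (by simpa using hs)
  calc ‖(Complex.Gamma s)⁻¹‖ = ‖s‖ * ‖(Complex.Gamma (s + 1))⁻¹‖ := by
        rw [Complex.one_div_Gamma_eq_self_mul_one_div_Gamma_add_one, norm_mul]
    _ ≤ K * exp s.re * exp ((c - c') * |s.im|) *
          (A * exp (-(r + 1) * (s + 1).re) * exp (c' * |(s + 1).im|)) := by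
        gcongr
        exact (norm_nonneg s).trans norm_le
    _ = K * A * (exp s.re * exp (-(r + 1) * (s.re + 1))) *
          (exp ((c - c') * |s.im|) * exp (c' * |s.im|)) := by
        simp only [Complex.add_re, Complex.add_im, Complex.one_re, Complex.one_im, add_zero]
        ring
    _ = K * A * exp (-(r + 1)) * exp (-r * s.re) * exp (c * |s.im|) := by
        simp only [mul_assoc, ← Real.exp_add]
        ring_nf

theorem exists_norm_inv_Gamma_le (a r : ℝ) {c : ℝ} (hc : π / 2 < c) :
    ∃ A, ∀ s : ℂ, a ≤ s.re →
      ‖(Complex.Gamma s)⁻¹‖ ≤ A * exp (-r * s.re) * exp (c * |s.im|) := by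
  obtain ⟨k, hk⟩ := exists_nat_gt (1 / 2 - a)
  induction k generalizing a r c with
  | zero =>
    obtain ⟨A, hA⟩ := exists_norm_inv_Gamma_le_of_half_le_re r hc.le
    exact ⟨A, fun s hs ↦ hA s (by push_cast at hk; linarith)⟩
  | succ k ih =>
    push_cast at hk
    exact exists_norm_inv_Gamma_le_of_add_one
      (fun r c hc ↦ ih (a + 1) r hc (by linarith)) r hc

/-! ### Integrals against the hyperbolic secant -/

theorem integrable_exp_neg_mul_abs {c : ℝ} (hc : 0 < c) :
    Integrable fun t : ℝ ↦ exp (-c * |t|) := by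
  rw [← integrableOn_univ, ← Set.Iic_union_Ioi (a := (0 : ℝ))]
  refine IntegrableOn.union ?_ ?_
  · refine (integrableOn_exp_mul_Iic hc 0).congr_fun (fun t ht ↦ ?_) measurableSet_Iic
    simp [abs_of_nonpos (Set.mem_Iic.1 ht)]
  · refine (integrableOn_exp_mul_Ioi (neg_neg_of_pos hc) 0).congr_fun (fun t ht ↦ ?_)
      measurableSet_Ioi
    simp [abs_of_pos (Set.mem_Ioi.1 ht)]

theorem integral_exp_neg_mul_abs {c : ℝ} (hc : 0 < c) : ∫ t : ℝ, exp (-c * |t|) = 2 / c := by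
  rw [integral_comp_abs (f := fun t ↦ exp (-c * t)), integral_exp_mul_Ioi (neg_neg_of_pos hc)]
  simp [div_eq_mul_inv]

theorem exp_abs_le_two_mul_cosh (x : ℝ) : exp |x| ≤ 2 * cosh x := by
  rw [Real.cosh_eq]
  linarith [Real.exp_abs_le x]

theorem exp_abs_le_four_mul_abs_sinh {x : ℝ} (hx : 1 ≤ |x|) : exp |x| ≤ 4 * |Real.sinh x| := by
  rw [Real.abs_sinh, Real.sinh_eq]
  have h_neg : exp (-|x|) ≤ 1 := Real.exp_le_one_iff.2 (neg_nonpos.2 (abs_nonneg x))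
  have h_pos : |x| + 1 ≤ exp |x| := Real.add_one_le_exp _
  linarith

theorem abs_sinh_im_le_norm_sin (s : ℂ) : |Real.sinh s.im| ≤ ‖Complex.sin s‖ := by
  refine abs_le_of_sq_le_sq ?_ (norm_nonneg _)
  rw [← Complex.normSq_eq_norm_sq, Complex.sin_eq]
  norm_cast
  rw [Complex.normSq_add_mul_I]
  nlinarith [Real.cosh_sq s.im, Real.sin_sq_add_cos_sq s.re, sq_nonneg (Real.sin s.re)]

theorem integrable_inv_cosh : Integrable fun t ↦ (cosh t)⁻¹ := by
  refine ((integrable_exp_neg_mul_abs one_pos).const_mul 2).mono' ?_ (ae_of_all _ fun t ↦ ?_)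
  · exact (Real.continuous_cosh.inv₀ fun t ↦ (Real.cosh_pos t).ne').aestronglyMeasurable
  · have hcosh := Real.cosh_pos t
    rw [Real.norm_of_nonneg (inv_pos.2 hcosh).le, neg_one_mul, Real.exp_neg,
      ← div_eq_mul_inv, inv_eq_one_div, div_le_div_iff₀ hcosh (Real.exp_pos _), one_mul]
    exact exp_abs_le_two_mul_cosh t

theorem integral_inv_cosh : ∫ t, (cosh t)⁻¹ = π := by
  have hderiv (t : ℝ) : HasDerivAt (fun t ↦ Real.arctan (Real.sinh t)) (cosh t)⁻¹ t := by
    convert! (Real.hasDerivAt_sinh t).arctan using 1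
    rw [← Real.cosh_sq']
    field_simp [(Real.cosh_pos t).ne']
  have h_bot := (tendsto_nhds_of_tendsto_nhdsWithin Real.tendsto_arctan_atBot).comp
    Real.sinhOrderIso.tendsto_atBot
  have h_top := (tendsto_nhds_of_tendsto_nhdsWithin Real.tendsto_arctan_atTop).comp
    Real.sinhOrderIso.tendsto_atTop
  rw [integral_of_hasDerivAt_of_tendsto hderiv integrable_inv_cosh h_bot h_top]
  ring

/-- The integral of `F` along the line `Re s = x` against the weight `1 / cosh (π Im s)`. When `x`
is a half-integer, `sin (π s) = ± cosh (π Im s)` on that line, so that `± sechIntegral F x / 2` is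
the Mellin–Barnes integral `(1 / 2πi) ∫ F(s) π / sin (π s) ds`. -/
noncomputable def sechIntegral (F : ℂ → ℂ) (x : ℝ) : ℂ :=
  ∫ t : ℝ, F (x + t * I) / cosh (π * t)

theorem sechIntegral_const (w : ℂ) (x : ℝ) : sechIntegral (fun _ ↦ w) x = w := by
  have h : ∫ t : ℝ, (cosh (π * t))⁻¹ = 1 := by
    rw [Measure.integral_comp_mul_left fun t ↦ (cosh t)⁻¹, integral_inv_cosh,
      abs_of_pos (by positivity), smul_eq_mul, inv_mul_cancel₀ Real.pi_ne_zero]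
  simp_rw [sechIntegral, div_eq_mul_inv, ← Complex.ofReal_inv]
  rw [integral_const_mul, integral_complex_ofReal, h, Complex.ofReal_one, mul_one]

theorem sechIntegral_comp_add_ofReal (F : ℂ → ℂ) (c x : ℝ) :
    sechIntegral (fun s ↦ F (s + c)) x = sechIntegral F (x + c) := by
  simp only [sechIntegral, Complex.ofReal_add, add_right_comm]

theorem norm_div_cosh_le {A b t : ℝ} {w : ℂ} (hw : ‖w‖ ≤ A * exp (b * |t|)) :
    ‖w / cosh (π * t)‖ ≤ 2 * A * exp (-(π - b) * |t|) := by
  have hcosh := Real.cosh_pos (π * t)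
  have hA : 0 ≤ A := nonneg_of_mul_nonneg_left ((norm_nonneg w).trans hw) (Real.exp_pos _)
  rw [norm_div, Complex.norm_real, Real.norm_of_nonneg hcosh.le, div_le_iff₀ hcosh]
  calc ‖w‖ ≤ A * exp (b * |t|) := hw
    _ = A * exp (-(π - b) * |t|) * exp |π * t| := by
        rw [mul_assoc, ← Real.exp_add, abs_mul, abs_of_pos Real.pi_pos]
        ring_nf
    _ ≤ A * exp (-(π - b) * |t|) * (2 * cosh (π * t)) := by
        gcongr
        exact exp_abs_le_two_mul_cosh _
    _ = 2 * A * exp (-(π - b) * |t|) * cosh (π * t) := by ring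

theorem integrable_div_cosh {f : ℝ → ℂ} (hf : Continuous f) {A b : ℝ} (hb : b < π)
    (hbound : ∀ t, ‖f t‖ ≤ A * exp (b * |t|)) :
    Integrable fun t ↦ f t / cosh (π * t) := by
  refine ((integrable_exp_neg_mul_abs (sub_pos.2 hb)).const_mul (2 * A)).mono' ?_
    (ae_of_all _ fun t ↦ norm_div_cosh_le (hbound t))
  refine (hf.div (by fun_prop) fun t ↦ ?_).aestronglyMeasurable
  exact_mod_cast (Real.cosh_pos _).ne'

theorem norm_sechIntegral_le {F : ℂ → ℂ} {x A b : ℝ} (hb : b < π)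
    (hF : ∀ t : ℝ, ‖F (x + t * I)‖ ≤ A * exp (b * |t|)) :
    ‖sechIntegral F x‖ ≤ 4 * A / (π - b) := by
  have hb' : 0 < π - b := sub_pos.2 hb
  calc ‖sechIntegral F x‖ ≤ ∫ t : ℝ, 2 * A * exp (-(π - b) * |t|) :=
        norm_integral_le_of_norm_le ((integrable_exp_neg_mul_abs hb').const_mul _)
          (ae_of_all _ fun t ↦ norm_div_cosh_le (hF t))
    _ = 4 * A / (π - b) := by
        rw [integral_const_mul, integral_exp_neg_mul_abs hb']
        ring

theorem integral_vertical_eq_of_differentiableOn_strip {E : Type*} [NormedAddCommGroup E]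
    [NormedSpace ℂ E] [CompleteSpace E] {f : ℂ → E} {a b : ℝ}
    (hf : DifferentiableOn ℂ f (Complex.re ⁻¹' Set.uIcc a b))
    (ha : Integrable fun t : ℝ ↦ f (a + t * I)) (hb : Integrable fun t : ℝ ↦ f (b + t * I))
    (hlim : Tendsto (fun T : ℝ ↦ ∫ x in a..b, f (x + T * I)) (cocompact ℝ) (𝓝 0)) :
    ∫ t : ℝ, f (a + t * I) = ∫ t : ℝ, f (b + t * I) := by
  have rectangle (T : ℝ) : (∫ x in a..b, f (x + (-T : ℝ) * I)) - (∫ x in a..b, f (x + T * I)) +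
      I • (∫ t in -T..T, f (b + t * I)) - I • (∫ t in -T..T, f (a + t * I)) = 0 := by
    have := Complex.integral_boundary_rect_eq_zero_of_differentiableOn f ⟨a, -T⟩ ⟨b, T⟩
      (hf.mono Set.inter_subset_left)
    exact this
  rw [cocompact_eq_atBot_atTop, tendsto_sup] at hlim
  have lim_rectangle := ((((hlim.1.comp tendsto_neg_atTop_atBot).sub hlim.2).add
    ((intervalIntegral_tendsto_integral hb tendsto_neg_atTop_atBot tendsto_id).const_smul I)).sub
    ((intervalIntegral_tendsto_integral ha tendsto_neg_atTop_atBot tendsto_id).const_smul I)).congr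
    rectangle
  have h := tendsto_nhds_unique lim_rectangle tendsto_const_nhds
  rw [sub_zero, zero_add, ← smul_sub, smul_eq_zero_iff_right Complex.I_ne_zero, sub_eq_zero] at h
  exact h.symm

theorem dslope_sin_pi_mul_ne_zero {s : ℂ} (hs : |s.re| < 1) :
    dslope (fun s : ℂ ↦ Complex.sin (π * s)) 0 s ≠ 0 := by
  rcases eq_or_ne s 0 with rfl | hs₀
  · have hderiv : HasDerivAt (fun s : ℂ ↦ Complex.sin (π * s)) (Complex.cos (π * 0) * π) 0 := by
      simpa using ((hasDerivAt_id (0 : ℂ)).const_mul (π : ℂ)).csin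
    rw [dslope_same, hderiv.deriv]
    simp
  · have sin_ne_zero : Complex.sin (π * s) ≠ 0 := fun h ↦ by
      obtain ⟨k, hk⟩ := Complex.sin_eq_zero_iff.1 h
      rw [mul_comm (k : ℂ), mul_right_inj' (Complex.ofReal_ne_zero.2 Real.pi_ne_zero)] at hk
      rw [hk, Complex.intCast_re] at hs
      have hk₀ : k = 0 := Int.abs_lt_one_iff.1 (by exact_mod_cast hs)
      exact hs₀ (by rw [hk, hk₀, Int.cast_zero])
    rw [dslope_of_ne _ hs₀, slope_def_field]
    simpa using ⟨sin_ne_zero, hs₀⟩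

theorem differentiableOn_dslope_div_dslope_sin {F : ℂ → ℂ}
    (hF : DifferentiableOn ℂ F (Complex.re ⁻¹' Set.Icc (-1 / 2) (1 / 2))) :
    DifferentiableOn ℂ
      (fun s ↦ dslope F 0 s / dslope (fun s : ℂ ↦ Complex.sin (π * s)) 0 s)
      (Complex.re ⁻¹' Set.Icc (-1 / 2) (1 / 2)) := by
  have strip_mem_nhds : Complex.re ⁻¹' Set.Icc (-1 / 2) (1 / 2) ∈ 𝓝 (0 : ℂ) :=
    Complex.continuous_re.continuousAt.preimage_mem_nhds
      (Icc_mem_nhds (by norm_num) (by norm_num))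
  have hsin : Differentiable ℂ fun s : ℂ ↦ Complex.sin (π * s) := by fun_prop
  refine ((Complex.differentiableOn_dslope strip_mem_nhds).2 hF).div
    ((Complex.differentiableOn_dslope strip_mem_nhds).2 hsin.differentiableOn) fun s hs ↦
    dslope_sin_pi_mul_ne_zero (abs_lt.2 ⟨?_, ?_⟩)
  · linarith [hs.1]
  · linarith [hs.2]

theorem dslope_div_dslope_sin_of_ne {F : ℂ → ℂ} (hF : F 0 = 0) {s : ℂ} (hs : s ≠ 0) :
    dslope F 0 s / dslope (fun s : ℂ ↦ Complex.sin (π * s)) 0 s =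
      F s / Complex.sin (π * s) := by
  rw [dslope_of_ne _ hs, dslope_of_ne _ hs, slope_def_field, slope_def_field]
  simp only [hF, mul_zero, Complex.sin_zero, sub_zero]
  exact div_div_div_cancel_right₀ hs _ _

theorem sin_pi_mul_neg_half_add (t : ℝ) :
    Complex.sin (π * ((-1 / 2 : ℝ) + t * I)) = -cosh (π * t) := by
  rw [show (π * ((-1 / 2 : ℝ) + t * I) : ℂ) = (π * t : ℝ) * I - π / 2 by push_cast; ring,
    Complex.sin_sub_pi_div_two, Complex.cos_mul_I, Complex.ofReal_cosh]

theorem norm_div_sin_pi_mul_le {w s : ℂ} {A b : ℝ} (hw : ‖w‖ ≤ A * exp (b * |s.im|))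
    (hs : 1 ≤ |s.im|) :
    ‖w / Complex.sin (π * s)‖ ≤ 4 * A * exp (-(π - b) * |s.im|) := by
  have hA : 0 ≤ A := nonneg_of_mul_nonneg_left ((norm_nonneg w).trans hw) (Real.exp_pos _)
  have abs_im : |(π * s).im| = π * |s.im| := by
    rw [Complex.im_ofReal_mul, abs_mul, abs_of_pos Real.pi_pos]
  have exp_le : exp (π * |s.im|) ≤ 4 * ‖Complex.sin (π * s)‖ := by
    rw [← abs_im]
    refine (exp_abs_le_four_mul_abs_sinh ?_).trans ?_
    · rw [abs_im]
      nlinarith [Real.pi_gt_three]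
    · gcongr
      exact abs_sinh_im_le_norm_sin _
  rw [norm_div, div_le_iff₀ (by linarith [Real.exp_pos (π * |s.im|)])]
  calc ‖w‖ ≤ A * exp (b * |s.im|) := hw
    _ = A * exp (-(π - b) * |s.im|) * exp (π * |s.im|) := by
        rw [mul_assoc, ← Real.exp_add]
        ring_nf
    _ ≤ A * exp (-(π - b) * |s.im|) * (4 * ‖Complex.sin (π * s)‖) := by gcongr
    _ = 4 * A * exp (-(π - b) * |s.im|) * ‖Complex.sin (π * s)‖ := by ring

theorem tendsto_integral_div_sin_pi_mul {F : ℂ → ℂ} {x y A b : ℝ} (hb : b < π)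
    (hbound : ∀ s ∈ Complex.re ⁻¹' Set.uIcc x y, ‖F s‖ ≤ A * exp (b * |s.im|)) :
    Tendsto (fun T : ℝ ↦ ∫ u in x..y, F (u + T * I) / Complex.sin (π * (u + T * I)))
      (cocompact ℝ) (𝓝 0) := by
  have tendsto_abs : Tendsto (fun T : ℝ ↦ |T|) (cocompact ℝ) atTop :=
    tendsto_norm_cocompact_atTop
  have tendsto_bound : Tendsto (fun T : ℝ ↦ 4 * A * exp (-(π - b) * |T|) * |y - x|)
      (cocompact ℝ) (𝓝 0) := by
    have := (Real.tendsto_exp_atBot.comp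
      (tendsto_abs.const_mul_atTop_of_neg (neg_neg_of_pos (sub_pos.2 hb))))
    simpa using (this.const_mul (4 * A)).mul_const |y - x|
  refine squeeze_zero_norm' ?_ tendsto_bound
  filter_upwards [tendsto_abs.eventually_ge_atTop 1] with T hT
  refine intervalIntegral.norm_integral_le_of_norm_le_const fun u hu ↦ ?_
  simpa using norm_div_sin_pi_mul_le (hbound (u + T * I) (by simpa using Set.uIoc_subset_uIcc hu))
    (by simpa using hT)

theorem integrable_vertical_div_cosh {F : ℂ → ℂ} {S : Set ℝ} {x A b : ℝ} (hb : b < π)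
    (hF : ContinuousOn F (Complex.re ⁻¹' S))
    (hbound : ∀ s ∈ Complex.re ⁻¹' S, ‖F s‖ ≤ A * exp (b * |s.im|)) (hx : x ∈ S) :
    Integrable fun t : ℝ ↦ F (x + t * I) / cosh (π * t) := by
  have mem_line (t : ℝ) : (x + t * I : ℂ) ∈ Complex.re ⁻¹' S := by simpa using hx
  exact integrable_div_cosh (hF.comp_continuous (by fun_prop) mem_line) hb fun t ↦ by
    simpa using hbound _ (mem_line t)

theorem sechIntegral_half_eq_neg_of_eq_zero {F : ℂ → ℂ} {A b : ℝ} (hb : b < π)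
    (hF : DifferentiableOn ℂ F (Complex.re ⁻¹' Set.Icc (-1 / 2) (1 / 2))) (hF₀ : F 0 = 0)
    (hbound : ∀ s ∈ Complex.re ⁻¹' Set.Icc (-1 / 2) (1 / 2), ‖F s‖ ≤ A * exp (b * |s.im|)) :
    sechIntegral F (1 / 2) = -sechIntegral F (-1 / 2) := by
  -- `G` extends `F s / sin (π s)` holomorphically across its removable singularity at `0`.
  set G : ℂ → ℂ := fun s ↦ dslope F 0 s / dslope (fun s : ℂ ↦ Complex.sin (π * s)) 0 s
  have hG {s : ℂ} (hs : s ≠ 0) : G s = F s / Complex.sin (π * s) :=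
    dslope_div_dslope_sin_of_ne hF₀ hs
  have hG_right (t : ℝ) :
      G ((1 / 2 : ℝ) + t * I) = F ((1 / 2 : ℝ) + t * I) / cosh (π * t) := by
    rw [hG fun h ↦ by simpa using congrArg Complex.re h, sin_pi_mul_half_add]
  have hG_left (t : ℝ) :
      G ((-1 / 2 : ℝ) + t * I) = -(F ((-1 / 2 : ℝ) + t * I) / cosh (π * t)) := by
    rw [hG fun h ↦ by simpa using congrArg Complex.re h, sin_pi_mul_neg_half_add, div_neg]
  have huIcc : Set.uIcc (-1 / 2 : ℝ) (1 / 2) = Set.Icc (-1 / 2) (1 / 2) :=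
    Set.uIcc_of_le (by norm_num)
  have integrable_left :=
    (integrable_vertical_div_cosh (x := -1 / 2) hb hF.continuousOn hbound (by norm_num)).fun_neg
  have integrable_right :=
    integrable_vertical_div_cosh (x := 1 / 2) hb hF.continuousOn hbound (by norm_num)
  simp only [← hG_left] at integrable_left
  simp only [← hG_right] at integrable_right
  have hlim : Tendsto (fun T : ℝ ↦ ∫ u in (-1 / 2 : ℝ)..1 / 2, G (u + T * I))
      (cocompact ℝ) (𝓝 0) := by
    refine (tendsto_integral_div_sin_pi_mul hb (huIcc ▸ hbound)).congr' ?_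
    filter_upwards [(isCompact_singleton (x := (0 : ℝ))).compl_mem_cocompact] with T hT
    refine intervalIntegral.integral_congr fun u _ ↦ (hG fun h ↦ hT ?_).symm
    simpa using congrArg Complex.im h
  have shift := integral_vertical_eq_of_differentiableOn_strip
    (huIcc ▸ differentiableOn_dslope_div_dslope_sin hF)
    integrable_left integrable_right hlim
  simp only [hG_left, hG_right, integral_neg] at shift
  exact shift.symm

theorem sechIntegral_sub_const {F : ℂ → ℂ} {x : ℝ}
    (hF : Integrable fun t : ℝ ↦ F (x + t * I) / cosh (π * t)) (w : ℂ) :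
    sechIntegral (fun s ↦ F s - w) x = sechIntegral F x - w := by
  have integrable_const : Integrable fun t : ℝ ↦ w / (cosh (π * t) : ℂ) :=
    integrable_div_cosh continuous_const Real.pi_pos (A := ‖w‖) fun t ↦ by simp
  have h := integral_sub hF integrable_const
  change _ = sechIntegral F x - sechIntegral (fun _ ↦ w) x at h
  rw [sechIntegral_const] at h
  simpa only [sechIntegral, sub_div] using h

theorem sechIntegral_half_add_sechIntegral_neg_half {F : ℂ → ℂ} {A b : ℝ} (hb₀ : 0 ≤ b)
    (hb : b < π) (hF : DifferentiableOn ℂ F (Complex.re ⁻¹' Set.Icc (-1 / 2) (1 / 2)))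
    (hbound : ∀ s ∈ Complex.re ⁻¹' Set.Icc (-1 / 2) (1 / 2), ‖F s‖ ≤ A * exp (b * |s.im|)) :
    sechIntegral F (1 / 2) + sechIntegral F (-1 / 2) = 2 * F 0 := by
  have norm_F_zero : ‖F 0‖ ≤ A := by simpa using hbound 0 (by norm_num)
  have hA : 0 ≤ A := (norm_nonneg _).trans norm_F_zero
  have bound_sub : ∀ s ∈ Complex.re ⁻¹' Set.Icc (-1 / 2) (1 / 2),
      ‖F s - F 0‖ ≤ 2 * A * exp (b * |s.im|) := fun s hs ↦
    calc ‖F s - F 0‖ ≤ ‖F s‖ + ‖F 0‖ := norm_sub_le _ _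
      _ ≤ A * exp (b * |s.im|) + A * exp (b * |s.im|) := by
          gcongr
          · exact hbound s hs
          · exact norm_F_zero.trans <| le_mul_of_one_le_right hA (Real.one_le_exp (by positivity))
      _ = 2 * A * exp (b * |s.im|) := by ring
  have h := sechIntegral_half_eq_neg_of_eq_zero hb (hF.sub_const (F 0)) (sub_self _) bound_sub
  have integrable_line {x : ℝ} := integrable_vertical_div_cosh (x := x) hb hF.continuousOn hbound
  rw [sechIntegral_sub_const (integrable_line (by norm_num)),
    sechIntegral_sub_const (integrable_line (by norm_num))] at h
  linear_combination h

theorem sechIntegral_add_half_add_sechIntegral_sub_half {F : ℂ → ℂ} {A b : ℝ} (c : ℝ)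
    (hb₀ : 0 ≤ b) (hb : b < π)
    (hF : DifferentiableOn ℂ F (Complex.re ⁻¹' Set.Icc (c - 1 / 2) (c + 1 / 2)))
    (hbound : ∀ s ∈ Complex.re ⁻¹' Set.Icc (c - 1 / 2) (c + 1 / 2),
      ‖F s‖ ≤ A * exp (b * |s.im|)) :
    sechIntegral F (c + 1 / 2) + sechIntegral F (c - 1 / 2) = 2 * F c := by
  have maps_strip : Set.MapsTo (fun s : ℂ ↦ s + c) (Complex.re ⁻¹' Set.Icc (-1 / 2) (1 / 2))
      (Complex.re ⁻¹' Set.Icc (c - 1 / 2) (c + 1 / 2)) := fun s ⟨hs₁, hs₂⟩ ↦ by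
    constructor <;> rw [Complex.add_re, Complex.ofReal_re] <;> linarith
  have h := sechIntegral_half_add_sechIntegral_neg_half hb₀ hb
    (hF.comp (by fun_prop) maps_strip) fun s hs ↦ by simpa using hbound _ (maps_strip hs)
  simp only [Function.comp_def, sechIntegral_comp_add_ofReal, zero_add] at h
  rw [← h]
  congr 2 <;> ring

theorem tendsto_sechIntegral_atTop {F : ℂ → ℂ} {x₀ A b δ : ℝ} (hδ : 0 < δ) (hb : b < π)
    (hbound : ∀ s : ℂ, x₀ ≤ s.re → ‖F s‖ ≤ A * exp (-δ * s.re) * exp (b * |s.im|)) :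
    Tendsto (sechIntegral F) atTop (𝓝 0) := by
  have tendsto_bound : Tendsto (fun x ↦ 4 * (A * exp (-δ * x)) / (π - b)) atTop (𝓝 0) := by
    have := Real.tendsto_exp_atBot.comp
      (tendsto_id.const_mul_atTop_of_neg (neg_neg_of_pos hδ))
    simpa using ((this.const_mul A).const_mul 4).div_const (π - b)
  refine squeeze_zero_norm' ?_ tendsto_bound
  filter_upwards [eventually_ge_atTop x₀] with x hx
  exact norm_sechIntegral_le hb fun t ↦ by simpa using hbound (x + t * I) (by simpa using hx)

theorem hasSum_neg_one_pow_mul_of_norm_le {F : ℂ → ℂ} {A b δ : ℝ} (hδ : 0 < δ) (hb₀ : 0 ≤ b)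
    (hb : b < π) (hF : DifferentiableOn ℂ F {s | -1 / 2 ≤ s.re})
    (hbound : ∀ s : ℂ, -1 / 2 ≤ s.re → ‖F s‖ ≤ A * exp (-δ * s.re) * exp (b * |s.im|)) :
    HasSum (fun n : ℕ ↦ (-1) ^ n * F n) (sechIntegral F (-1 / 2) / 2) := by
  set u : ℕ → ℂ := fun n ↦ (-1) ^ n * sechIntegral F (n - 1 / 2)
  have hA : 0 ≤ A := by simpa using (norm_nonneg _).trans (hbound 0 (by norm_num))
  have telescope (n : ℕ) : (-1) ^ n * F n = (u n - u (n + 1)) / 2 := by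
    have re_ge {s : ℂ} (hs : s ∈ Complex.re ⁻¹' Set.Icc (n - 1 / 2 : ℝ) (n + 1 / 2)) :
        -1 / 2 ≤ s.re := by
      linarith [hs.1, n.cast_nonneg (α := ℝ)]
    have mean := sechIntegral_add_half_add_sechIntegral_sub_half (A := A * exp (δ / 2)) n hb₀ hb
      (hF.mono fun s ↦ re_ge) fun s hs ↦ (hbound s (re_ge hs)).trans <| by
        gcongr
        nlinarith [re_ge hs]
    simp only [u, pow_succ, Nat.cast_succ]
    rw [show ((n : ℝ) + 1 - 1 / 2) = n + 1 / 2 by ring]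
    push_cast at mean
    linear_combination (-(-1) ^ n / 2) * mean
  have u_zero : u 0 = sechIntegral F (-1 / 2) := by norm_num [u]
  have tendsto_u : Tendsto u atTop (𝓝 0) := by
    have tendsto_index : Tendsto (fun n : ℕ ↦ (n : ℝ) - 1 / 2) atTop atTop :=
      tendsto_atTop_add_const_right _ _ tendsto_natCast_atTop_atTop
    rw [tendsto_zero_iff_norm_tendsto_zero]
    simpa [u] using ((tendsto_sechIntegral_atTop hδ hb hbound).comp tendsto_index).norm
  have summable_terms : Summable fun n : ℕ ↦ (-1) ^ n * F n := by
    refine .of_norm_bounded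
      ((Real.summable_exp_nat_mul_iff.2 (neg_neg_of_pos hδ)).mul_left A) fun n ↦ ?_
    have := hbound n (by rw [Complex.natCast_re]; linarith [n.cast_nonneg (α := ℝ)])
    simpa [mul_comm] using this
  rw [summable_terms.hasSum_iff_tendsto_nat, ← u_zero]
  simp only [telescope, ← Finset.sum_div, Finset.sum_range_sub']
  simpa using (tendsto_u.const_sub (u 0)).div_const 2

/-! ### The Mittag-Leffler function -/

/-- The function `s ↦ w ^ s / Γ(α s + β)` on the complex plane, which interpolates the terms of the
Mittag-Leffler series: at `s = n` and `w = -z` it takes the value `(-1) ^ n z ^ n / Γ(nα + β)`. -/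
noncomputable def mittagLefflerKernel (α β : ℝ) (w s : ℂ) : ℂ :=
  w ^ s * (Complex.Gamma (α * s + β))⁻¹

theorem differentiable_mittagLefflerKernel (α β : ℝ) {w : ℂ} (hw : w ≠ 0) :
    Differentiable ℂ (mittagLefflerKernel α β w) := by
  refine .mul (fun s ↦ (differentiableAt_id.const_cpow (.inl hw)))
    (Complex.differentiable_one_div_Gamma.comp (by fun_prop))

theorem neg_one_pow_mul_mittagLefflerKernel (α β : ℝ) (z : ℂ) (n : ℕ) :
    (-1) ^ n * mittagLefflerKernel α β (-z) n = z ^ n / Complex.Gamma (n * α + β) := by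
  rw [mittagLefflerKernel, Complex.cpow_natCast, ← mul_assoc, ← mul_pow, neg_mul_neg, one_mul,
    mul_comm (α : ℂ), div_eq_mul_inv]

theorem norm_cpow_le_rpow_mul_exp (w s : ℂ) :
    ‖w ^ s‖ ≤ ‖w‖ ^ s.re * exp (|w.arg| * |s.im|) := by
  refine (Complex.norm_cpow_le w s).trans ?_
  rw [div_eq_mul_inv, ← Real.exp_neg, ← abs_mul]
  gcongr
  exact neg_le_abs _

theorem exists_norm_mittagLefflerKernel_le {α b : ℝ} (hα : 0 < α) (hb : π / 2 * α < b)
    (β x₀ r : ℝ) :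
    ∃ A, ∀ w s : ℂ, x₀ ≤ s.re → ‖mittagLefflerKernel α β w s‖ ≤
      A * (‖w‖ ^ s.re * exp (-r * s.re)) * exp ((b + |w.arg|) * |s.im|) := by
  obtain ⟨A, hA⟩ := exists_norm_inv_Gamma_le (α * x₀ + β) (r / α) ((lt_div_iff₀ hα).2 hb)
  refine ⟨A * exp (-(r / α) * β), fun w s hs ↦ ?_⟩
  have norm_inv_Gamma_le : ‖(Complex.Gamma (α * s + β))⁻¹‖ ≤
      A * exp (-(r / α) * β) * exp (-r * s.re) * exp (b * |s.im|) := by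
    have exponent_re : -(r / α) * (α * s.re + β) = -(r / α) * β + -r * s.re := by
      field_simp
      ring
    have exponent_im : b / α * (|α| * |s.im|) = b * |s.im| := by
      rw [abs_of_pos hα]
      field_simp
    have := hA (α * s + β) (by simpa using mul_le_mul_of_nonneg_left hs hα.le)
    simpa [exponent_re, exponent_im, Real.exp_add, mul_assoc] using this
  calc ‖mittagLefflerKernel α β w s‖
      = ‖w ^ s‖ * ‖(Complex.Gamma (α * s + β))⁻¹‖ := norm_mul _ _
    _ ≤ ‖w‖ ^ s.re * exp (|w.arg| * |s.im|) *
          (A * exp (-(r / α) * β) * exp (-r * s.re) * exp (b * |s.im|)) := by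
        gcongr
        exact norm_cpow_le_rpow_mul_exp w s
    _ = A * exp (-(r / α) * β) * (‖w‖ ^ s.re * exp (-r * s.re)) *
          exp ((b + |w.arg|) * |s.im|) := by
        rw [add_mul, Real.exp_add]
        ring

theorem exists_norm_mittagLefflerKernel_le_exp_neg {α b : ℝ} (hα : 0 < α) (hb : π / 2 * α < b)
    (β x₀ : ℝ) {w : ℂ} (hw : w ≠ 0) :
    ∃ A, ∀ s : ℂ, x₀ ≤ s.re → ‖mittagLefflerKernel α β w s‖ ≤
      A * exp (-1 * s.re) * exp ((b + |w.arg|) * |s.im|) := by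
  obtain ⟨A, hA⟩ := exists_norm_mittagLefflerKernel_le hα hb β x₀ (Real.log ‖w‖ + 1)
  refine ⟨A, fun s hs ↦ (hA w s hs).trans_eq ?_⟩
  rw [Real.rpow_def_of_pos (norm_pos_iff.2 hw), ← Real.exp_add]
  ring_nf

theorem mittagLeffler_eq_sub_sechIntegral {α : ℝ} (hα : 0 < α) (β : ℝ) {z : ℂ} (hz : z ≠ 0)
    (harg : π / 2 * α + |(-z).arg| < π) :
    mittagLeffler α β z = mittagLefflerKernel α β (-z) (-1) -
      sechIntegral (mittagLefflerKernel α β (-z)) (-3 / 2) / 2 := by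
  obtain ⟨b, hαb, hb⟩ := exists_between (lt_sub_iff_add_lt.2 harg)
  have hb_pos : 0 < b := lt_trans (by positivity) hαb
  have hb₀ : 0 ≤ b + |(-z).arg| := by positivity
  obtain ⟨A, hA⟩ := exists_norm_mittagLefflerKernel_le_exp_neg hα hαb β (-3 / 2) (neg_ne_zero.2 hz)
  have hA₀ : 0 ≤ A := by simpa using (norm_nonneg _).trans (hA 0 (by norm_num))
  have hdiff := differentiable_mittagLefflerKernel α β (neg_ne_zero.2 hz)
  have series := hasSum_neg_one_pow_mul_of_norm_le one_pos hb₀ (lt_sub_iff_add_lt.1 hb)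
    hdiff.differentiableOn fun s hs ↦ hA s (by linarith)
  have bound_strip : ∀ s ∈ Complex.re ⁻¹' Set.Icc ((-1 : ℝ) - 1 / 2) (-1 + 1 / 2),
      ‖mittagLefflerKernel α β (-z) s‖ ≤ A * exp (3 / 2) * exp ((b + |(-z).arg|) * |s.im|) :=
    fun s hs ↦ (hA s (by linarith [hs.1])).trans <| by
      gcongr
      linarith [hs.1]
  have residue := sechIntegral_add_half_add_sechIntegral_sub_half (-1) hb₀
    (lt_sub_iff_add_lt.1 hb) hdiff.differentiableOn bound_strip
  rw [show (-1 : ℝ) + 1 / 2 = -1 / 2 by norm_num, show (-1 : ℝ) - 1 / 2 = -3 / 2 by norm_num,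
    Complex.ofReal_neg, Complex.ofReal_one] at residue
  simp only [neg_one_pow_mul_mittagLefflerKernel] at series
  rw [mittagLeffler, series.tsum_eq]
  linear_combination residue / 2

theorem abs_arg_neg {z : ℂ} (hz : z ≠ 0) : |(-z).arg| = π - |z.arg| := by
  rw [← Complex.angle_one_right (neg_ne_zero.2 hz), ← Complex.angle_one_right hz,
    InnerProductGeometry.angle_neg_left]

theorem norm_mittagLefflerKernel_neg_one (α β : ℝ) (w : ℂ) :
    ‖mittagLefflerKernel α β w (-1)‖ = ‖(Complex.Gamma (β - α))⁻¹‖ * ‖w‖⁻¹ := by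
  rw [mittagLefflerKernel, norm_mul, Complex.cpow_neg_one, norm_inv w, mul_comm, mul_neg_one,
    neg_add_eq_sub]

theorem exists_norm_sechIntegral_mittagLefflerKernel_le {α μ : ℝ} (hα : 0 < α)
    (hμ : α * π / 2 < μ) (β x : ℝ) :
    ∃ C, ∀ w : ℂ, |w.arg| ≤ π - μ →
      ‖sechIntegral (mittagLefflerKernel α β w) x‖ ≤ C * ‖w‖ ^ x := by
  obtain ⟨b, hαb, hbμ⟩ := exists_between (show π / 2 * α < μ by linarith)
  obtain ⟨A, hA⟩ := exists_norm_mittagLefflerKernel_le hα hαb β x 0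
  refine ⟨4 * A / (μ - b), fun w harg ↦ ?_⟩
  have hA₀ : 0 ≤ A * ‖w‖ ^ x := by
    simpa using (norm_nonneg _).trans (hA w x (by simp))
  have bound (t : ℝ) : ‖mittagLefflerKernel α β w (x + t * I)‖ ≤
      A * ‖w‖ ^ x * exp ((b + (π - μ)) * |t|) := by
    refine (hA w (x + t * I) (by simp)).trans ?_
    simp only [Complex.add_re, Complex.ofReal_re, Complex.re_ofReal_mul, Complex.I_re, mul_zero,
      add_zero, neg_zero, zero_mul, Real.exp_zero, mul_one, Complex.add_im, Complex.ofReal_im,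
      Complex.im_ofReal_mul, Complex.I_im, zero_add]
    gcongr
  calc ‖sechIntegral (mittagLefflerKernel α β w) x‖
      ≤ 4 * (A * ‖w‖ ^ x) / (π - (b + (π - μ))) := norm_sechIntegral_le (by linarith) bound
    _ = 4 * A / (μ - b) * ‖w‖ ^ x := by ring

theorem exists_norm_mittagLeffler_le_of_one_le_norm {α μ : ℝ} (hα : 0 < α)
    (hμ : α * π / 2 < μ) (β : ℝ) :
    ∃ C, ∀ z : ℂ, 1 ≤ ‖z‖ → μ ≤ |z.arg| → ‖mittagLeffler α β z‖ ≤ C * ‖z‖⁻¹ := by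
  obtain ⟨C, hC⟩ := exists_norm_sechIntegral_mittagLefflerKernel_le hα hμ β (-3 / 2)
  refine ⟨‖(Complex.Gamma (β - α))⁻¹‖ + |C| / 2, fun z hz hzμ ↦ ?_⟩
  have hz₀ : z ≠ 0 := norm_pos_iff.1 (one_pos.trans_le hz)
  have harg : |(-z).arg| ≤ π - μ := by
    rw [abs_arg_neg hz₀]
    linarith
  have norm_rpow_le : ‖z‖ ^ (-3 / 2 : ℝ) ≤ ‖z‖⁻¹ := by
    rw [← Real.rpow_neg_one]
    exact Real.rpow_le_rpow_of_exponent_le hz (by norm_num)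
  have remainder : ‖sechIntegral (mittagLefflerKernel α β (-z)) (-3 / 2)‖ ≤ |C| * ‖z‖⁻¹ := by
    refine (hC (-z) harg).trans ?_
    rw [norm_neg]
    gcongr
    exact le_abs_self C
  calc ‖mittagLeffler α β z‖
      ≤ ‖mittagLefflerKernel α β (-z) (-1)‖ +
          ‖sechIntegral (mittagLefflerKernel α β (-z)) (-3 / 2) / 2‖ := by
        rw [mittagLeffler_eq_sub_sechIntegral hα β hz₀ (by linarith)]
        exact norm_sub_le _ _
    _ ≤ ‖(Complex.Gamma (β - α))⁻¹‖ * ‖z‖⁻¹ + |C| * ‖z‖⁻¹ / 2 := by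
        rw [norm_mittagLefflerKernel_neg_one, norm_neg, norm_div, Complex.norm_two]
        gcongr
    _ = (‖(Complex.Gamma (β - α))⁻¹‖ + |C| / 2) * ‖z‖⁻¹ := by ring

theorem summable_norm_inv_Gamma_nat_mul_add {α : ℝ} (hα : 0 < α) (β : ℝ) :
    Summable fun n : ℕ ↦ ‖(Complex.Gamma (n * α + β))⁻¹‖ := by
  obtain ⟨A, hA⟩ := exists_norm_inv_Gamma_le β α⁻¹ (lt_add_one (π / 2))
  have summable_exp : Summable fun n : ℕ ↦ A * exp (-α⁻¹ * β) * exp (n * -1) :=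
    (Real.summable_exp_nat_mul_iff.2 neg_one_lt_zero).mul_left _
  refine summable_exp.of_nonneg_of_le (fun n ↦ norm_nonneg _) fun n ↦ ?_
  have exponent : -α⁻¹ * (n * α + β) = -α⁻¹ * β + n * -1 := by
    field_simp
    ring
  have le_re : β ≤ ((n : ℂ) * α + β).re := by
    simpa using mul_nonneg n.cast_nonneg hα.le
  simpa [exponent, Real.exp_add, mul_assoc] using hA (n * α + β) le_re

theorem exists_norm_mittagLeffler_le_of_norm_le_one {α : ℝ} (hα : 0 < α) (β : ℝ) :
    ∃ D, ∀ z : ℂ, ‖z‖ ≤ 1 → ‖mittagLeffler α β z‖ ≤ D := by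
  refine ⟨_, fun z hz ↦ tsum_of_norm_bounded
    (summable_norm_inv_Gamma_nat_mul_add hα β).hasSum fun n ↦ ?_⟩
  rw [div_eq_mul_inv, norm_mul, norm_pow]
  exact mul_le_of_le_one_left (norm_nonneg _) (pow_le_one₀ (norm_nonneg z) hz)

/-- For `α ∈ (0,2)`, `β ∈ ℝ` and `μ ∈ (απ/2, min(π, απ))`, there is `C > 0` such that
`|E_{α,β}(z)| ≤ C (1+|z|)⁻¹` on the sector `μ ≤ |arg z| ≤ π`. -/
theorem mittagLeffler_decay_sector (α β μ : ℝ) (hα : α ∈ Set.Ioo (0:ℝ) 2)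
    (hμ : μ ∈ Set.Ioo (α * Real.pi / 2) (min Real.pi (α * Real.pi))) :
    ∃ C > 0, ∀ z : ℂ, z ≠ 0 → μ ≤ |z.arg| → |z.arg| ≤ Real.pi →
      ‖mittagLeffler α β z‖ ≤ C * (1 + ‖z‖)⁻¹ := by
  obtain ⟨C, hC⟩ := exists_norm_mittagLeffler_le_of_one_le_norm hα.1 hμ.1 β
  obtain ⟨D, hD⟩ := exists_norm_mittagLeffler_le_of_norm_le_one hα.1 β
  refine ⟨2 * max 1 (max C D), by positivity, fun z _ hz _ ↦ ?_⟩
  rw [← div_eq_mul_inv, le_div_iff₀ (by positivity)]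
  rcases le_total ‖z‖ 1 with hz_le | hz_ge
  · calc ‖mittagLeffler α β z‖ * (1 + ‖z‖)
        ≤ max 1 (max C D) * (1 + 1) := by
          gcongr
          exact (hD z hz_le).trans (le_max_of_le_right (le_max_right C D))
      _ = 2 * max 1 (max C D) := by ring
  · have hz_pos : 0 < ‖z‖ := one_pos.trans_le hz_ge
    calc ‖mittagLeffler α β z‖ * (1 + ‖z‖)
        ≤ C * ‖z‖⁻¹ * (‖z‖ + ‖z‖) := by
          gcongr
          · exact (norm_nonneg _).trans (hC z hz_ge hz)
          · exact hC z hz_ge hz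
      _ = 2 * C := by
          rw [← two_mul, mul_left_comm, inv_mul_cancel_right₀ hz_pos.ne']
      _ ≤ 2 * max 1 (max C D) := by
          gcongr
          exact le_max_of_le_right (le_max_left C D)
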